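/- Let n ≥ 3 be a prime number and let ζ_n = exp(2πi/n). Then R(U_n) = ℤ[ζ_n], the subring of ℂ generated by ζ_n. -/

import Mathlib

/-- The antisymmetric bracket `⟨x,y⟩ = x·conj(y) − conj(x)·y`. -/
noncomputable def sbr (x y : ℂ) : ℂ :=
  x * (starRingEnd ℂ) y - (starRingEnd ℂ) x * y

/-- The intersection point `I_{u,v}(p,q)` of the lines `L_u(p)` and `L_v(q)`. -/
noncomputable def Iop (u v p q : ℂ) : ℂ :=
  (sbr u p / sbr u v) * v + (sbr v q / sbr v u) * u

/-- `origamiPts U` is the smallest subset of `ℂ` containing `0` and `1` that is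
closed under `(p,q) ↦ I_{u,v}(p,q)` for all `u, v ∈ U` with `u ≠ ±v`.  This is `R(U)`. -/
inductive origamiPts (U : Set ℂ) : ℂ → Prop
  | zero : origamiPts U 0
  | one : origamiPts U 1
  | inter {u v : ℂ} (hu : u ∈ U) (hv : v ∈ U) (huv : u ≠ v) (huv' : u ≠ -v)
      {p q : ℂ} (hp : origamiPts U p) (hq : origamiPts U q) :
      origamiPts U (Iop u v p q)

/-!
Let `1`, `u`, `v` be three directions in `U`, and let `a ∈ ℝu` be the third vertex of the triangle
on `0` and `1` with sides parallel to them.  Intersecting lines in these directions, starting from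
`0`, `1` and `a`, produces `-1` and `2`.  As `I_{u,v}` commutes with negation, `-1 ∈ R(U)` gives
closure under negation; as it commutes with translations, `R(U) + t ⊆ R(U)` as soon as `t` and
`1 + t` lie in `R(U)`.  Taking `t = 1` first, this makes `R(U)` an additive group.  For odd `n`
every `n`-th root of unity `x ≠ 1` is the square `w²` of another one, and `-w²` is the third vertex
for the directions `1`, `w²`, `w`; hence `ℤ[ζ_n]`, which is additively generated by the `n`-th roots
of unity, lies in `R(U_n)`.

Conversely `I_{u,v}(p,q)` is additive in `(p,q)`, so it is enough to project an `n`-th root of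
unity `x` along `u` onto the line `ℝv`.  The result is `x (y - 1) / (w - 1)` with `y = (u/x)²` and
`w = (u/v)²`.  As `n` is prime, `w` is a primitive `n`-th root of unity, so `y` is a power of `w`
and the quotient is a geometric sum.
-/

section RootsOfUnity

theorem mem_subringClosure_singleton_iff_of_isPrimitiveRoot {R : Type*} [CommRing R] [IsDomain R]
    {n : ℕ} [NeZero n] {ζ : R} (hζ : IsPrimitiveRoot ζ n) {z : R} :
    z ∈ Subring.closure {ζ} ↔ z ∈ AddSubgroup.closure {x : R | x ^ n = 1} := by
  have powers_eq : (Submonoid.closure {ζ} : Set R) = {x : R | x ^ n = 1} := by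
    ext x
    rw [SetLike.mem_coe, Submonoid.mem_closure_singleton]
    constructor
    · rintro ⟨k, rfl⟩
      rw [Set.mem_ofPred_eq, pow_right_comm, hζ.pow_eq_one, one_pow]
    · intro hx
      obtain ⟨k, -, hk⟩ := hζ.eq_pow_of_pow_eq_one hx
      exact ⟨k, hk⟩
  rw [Subring.mem_closure_iff, powers_eq]

theorem sub_one_div_sub_one_mem_of_pow_prime_eq_one {K : Type*} [Field K] {A : Subring K} {n : ℕ}
    (hn : n.Prime) {w y : K} (hwA : w ∈ A) (hw : w ^ n = 1) (hw1 : w ≠ 1) (hy : y ^ n = 1) :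
    (y - 1) / (w - 1) ∈ A := by
  have : Fact n.Prime := ⟨hn⟩
  have w_primitive : IsPrimitiveRoot w n := orderOf_eq_prime hw hw1 ▸ IsPrimitiveRoot.orderOf w
  obtain ⟨k, -, rfl⟩ := w_primitive.eq_pow_of_pow_eq_one hy
  rw [← geom_sum_eq hw1]
  exact sum_mem fun i _ => pow_mem hwA i

theorem exists_sq_eq_of_pow_odd_eq_one {M : Type*} [Monoid M] {n : ℕ} (hn : Odd n) {x : M}
    (hx : x ^ n = 1) (hx1 : x ≠ 1) : ∃ w : M, w ^ n = 1 ∧ w ^ 2 = x ∧ w ≠ 1 ∧ x ≠ w := by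
  obtain ⟨w, hw, rfl⟩ : ∃ w : M, w ^ n = 1 ∧ w ^ 2 = x := by
    obtain ⟨m, rfl⟩ := hn
    refine ⟨x ^ (m + 1), by rw [pow_right_comm, hx, one_pow], ?_⟩
    rw [← pow_mul, show (m + 1) * 2 = 2 * m + 1 + 1 by ring, pow_succ, hx, one_mul]
  have hw1 : w ≠ 1 := by
    rintro rfl
    exact hx1 (one_pow 2)
  refine ⟨w, hw, rfl, hw1, fun idempotent => hw1 ?_⟩
  rw [← hw, IsIdempotentElem.pow_eq ((sq w).symm.trans idempotent) hn.pos.ne']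

theorem div_sq_ne_one {K : Type*} [Field K] {a b : K} (hb : b ≠ 0) (h : a ≠ b) (h' : a ≠ -b) :
    (a / b) ^ 2 ≠ 1 := by
  rw [div_pow, Ne, div_eq_one_iff_eq (pow_ne_zero 2 hb), sq_eq_sq_iff_eq_or_eq_neg]
  exact not_or_intro h h'

end RootsOfUnity

section Bracket

variable {u v : ℂ}

theorem sbr_swap (u v : ℂ) : sbr v u = -sbr u v := by
  unfold sbr
  ring

theorem sbr_zero_right (u : ℂ) : sbr u 0 = 0 := by
  simp [sbr]

theorem sbr_add_right (u p q : ℂ) : sbr u (p + q) = sbr u p + sbr u q := by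
  simp only [sbr, map_add]
  ring

theorem sbr_neg_right (u p : ℂ) : sbr u (-p) = -sbr u p := by
  simp only [sbr, map_neg]
  ring

open ComplexConjugate in
theorem conj_sbr (u v : ℂ) : conj (sbr u v) = -sbr u v := by
  simp only [sbr, map_sub, map_mul, Complex.conj_conj]
  ring

theorem sbr_eq_of_norm_eq_one (hu : ‖u‖ = 1) (hv : ‖v‖ = 1) :
    sbr u v = v / u * ((u / v) ^ 2 - 1) := by
  have hu0 : u ≠ 0 := ne_zero_of_norm_ne_zero (hu ▸ one_ne_zero)
  have hv0 : v ≠ 0 := ne_zero_of_norm_ne_zero (hv ▸ one_ne_zero)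
  rw [sbr, ← Complex.inv_eq_conj hu, ← Complex.inv_eq_conj hv]
  field_simp

theorem sbr_ne_zero_of_norm_eq_one (hu : ‖u‖ = 1) (hv : ‖v‖ = 1) (h : u ≠ v) (h' : u ≠ -v) :
    sbr u v ≠ 0 := by
  have hu0 : u ≠ 0 := ne_zero_of_norm_ne_zero (hu ▸ one_ne_zero)
  have hv0 : v ≠ 0 := ne_zero_of_norm_ne_zero (hv ▸ one_ne_zero)
  rw [sbr_eq_of_norm_eq_one hu hv]
  exact mul_ne_zero (div_ne_zero hv0 hu0) (sub_ne_zero.mpr (div_sq_ne_one hv0 h h'))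

theorem sbr_ne_zero_of_pow_odd_eq_one {n : ℕ} (hn : Odd n) (hu : u ^ n = 1) (hv : v ^ n = 1)
    (h : u ≠ v) : sbr u v ≠ 0 := by
  refine sbr_ne_zero_of_norm_eq_one (Complex.norm_eq_one_of_pow_eq_one hu hn.pos.ne')
    (Complex.norm_eq_one_of_pow_eq_one hv hn.pos.ne') h ?_
  rintro rfl
  rw [hn.neg_pow, hv] at hu
  norm_num at hu

theorem sbr_div_sbr_mul_of_norm_eq_one {x : ℂ} (hu : ‖u‖ = 1) (hv : ‖v‖ = 1) (hx : ‖x‖ = 1) :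
    sbr u x / sbr u v * v = x * (((u / x) ^ 2 - 1) / ((u / v) ^ 2 - 1)) := by
  have hu0 : u ≠ 0 := ne_zero_of_norm_ne_zero (hu ▸ one_ne_zero)
  have hv0 : v ≠ 0 := ne_zero_of_norm_ne_zero (hv ▸ one_ne_zero)
  rw [sbr_eq_of_norm_eq_one hu hx, sbr_eq_of_norm_eq_one hu hv, mul_div_mul_comm,
    div_div_div_cancel_right₀ hu0]
  field_simp

theorem exists_real_mul_add_real_mul_eq (h : sbr u v ≠ 0) (z : ℂ) :
    ∃ r s : ℝ, r * u + s * v = z := by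
  have ratio_real (p q : ℂ) : ∃ r : ℝ, sbr p q / sbr u v = r :=
    Complex.conj_eq_iff_real.mp (by rw [map_div₀, conj_sbr, conj_sbr, neg_div_neg_eq])
  obtain ⟨r, hr⟩ := ratio_real z v
  obtain ⟨s, hs⟩ := ratio_real u z
  refine ⟨r, s, ?_⟩
  rw [← hr, ← hs]
  field_simp
  unfold sbr
  ring

end Bracket

section Intersection

variable {u v : ℂ}

theorem Iop_eq_of_mem_lines (h : sbr u v ≠ 0) {p q z : ℂ} {r s : ℝ} (hp : z = p + r * u)
    (hq : z = q + s * v) : Iop u v p q = z := by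
  obtain rfl : p = z - r * u := by rw [hp]; ring
  obtain rfl : q = z - s * v := by rw [hq]; ring
  rw [Iop, sbr_swap u v]
  field_simp
  simp only [sbr, map_sub, map_mul, Complex.conj_ofReal]
  ring

theorem Iop_add_right (h : sbr u v ≠ 0) (p q t : ℂ) :
    Iop u v (p + t) (q + t) = Iop u v p q + t := by
  rw [Iop, Iop, sbr_swap u v]
  field_simp
  simp only [sbr, map_add]
  ring

theorem Iop_neg_neg (u v p q : ℂ) : Iop u v (-p) (-q) = -Iop u v p q := by
  simp only [Iop, sbr_neg_right]
  ring

end Intersection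

namespace origamiPts

variable {U : Set ℂ}

theorem of_mem_lines {u v p q z : ℂ} (hu : u ∈ U) (hv : v ∈ U) (huv : sbr u v ≠ 0)
    (hp : origamiPts U p) (hq : origamiPts U q) (r s : ℝ) (hzp : z = p + r * u)
    (hzq : z = q + s * v) : origamiPts U z := by
  have u_ne : u ≠ v := by
    rintro rfl
    exact huv (by rw [sbr]; ring)
  have u_ne_neg : u ≠ -v := by
    rintro rfl
    exact huv (by rw [sbr, map_neg]; ring)
  exact Iop_eq_of_mem_lines huv hzp hzq ▸ inter hu hv u_ne u_ne_neg hp hq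

theorem neg {p : ℂ} (neg_one : origamiPts U (-1)) (hp : origamiPts U p) : origamiPts U (-p) := by
  induction hp with
  | zero => simpa only [neg_zero] using zero
  | one => exact neg_one
  | inter hu hv h h' _ _ ihp ihq => exact Iop_neg_neg _ _ _ _ ▸ inter hu hv h h' ihp ihq

theorem add_of_one_add (hU : ∀ u ∈ U, ‖u‖ = 1) {p t : ℂ} (ht : origamiPts U t)
    (one_add_t : origamiPts U (1 + t)) (hp : origamiPts U p) : origamiPts U (p + t) := by
  induction hp with
  | zero => rwa [zero_add]
  | one => exact one_add_t
  | inter hu hv h h' _ _ ihp ihq =>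
    have huv := sbr_ne_zero_of_norm_eq_one (hU _ hu) (hU _ hv) h h'
    exact Iop_add_right huv _ _ _ ▸ inter hu hv h h' ihp ihq

theorem add (hU : ∀ u ∈ U, ‖u‖ = 1) (two : origamiPts U 2) {p q : ℂ} (hp : origamiPts U p)
    (hq : origamiPts U q) : origamiPts U (p + q) := by
  have one_add_q : origamiPts U (1 + q) :=
    add_comm q 1 ▸ add_of_one_add hU one (one_add_one_eq_two (R := ℂ) ▸ two) hq
  exact add_of_one_add hU hq one_add_q hp

theorem neg_one {u v : ℂ} (one_mem : 1 ∈ U) (hu : u ∈ U) (hv : v ∈ U) (h1u : sbr 1 u ≠ 0)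
    (h1v : sbr 1 v ≠ 0) (huv : sbr u v ≠ 0) : origamiPts U (-1) := by
  obtain ⟨r, s, triangle⟩ := exists_real_mul_add_real_mul_eq huv 1
  have sv_mem : origamiPts U (s * v) :=
    of_mem_lines hu hv huv one zero (-r) s (by push_cast; linear_combination triangle) (by ring)
  have neg_ru_mem : origamiPts U (-(r * u)) :=
    of_mem_lines one_mem hu h1u sv_mem zero (-1) (-r)
      (by push_cast; linear_combination -triangle) (by push_cast; ring)
  exact of_mem_lines one_mem hv h1v zero neg_ru_mem (-1) (-s)
    (by push_cast; ring) (by push_cast; linear_combination triangle)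

theorem two {u v : ℂ} (one_mem : 1 ∈ U) (hu : u ∈ U) (hv : v ∈ U) (h1u : sbr 1 u ≠ 0)
    (h1v : sbr 1 v ≠ 0) (huv : sbr u v ≠ 0) : origamiPts U 2 := by
  obtain ⟨r, s, triangle⟩ := exists_real_mul_add_real_mul_eq huv 1
  have ru_mem : origamiPts U (r * u) :=
    of_mem_lines hu hv huv zero one r (-s) (by ring) (by push_cast; linear_combination triangle)
  have one_add_ru_mem : origamiPts U (1 + r * u) :=
    of_mem_lines one_mem hu h1u ru_mem one 1 r (by push_cast; ring) (by ring)
  exact of_mem_lines one_mem hv h1v zero one_add_ru_mem 2 s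
    (by push_cast; ring) (by linear_combination -triangle)

theorem exists_addSubgroup_coe_eq (hU : ∀ u ∈ U, ‖u‖ = 1) {u v : ℂ} (one_mem : 1 ∈ U)
    (hu : u ∈ U) (hv : v ∈ U) (h1u : sbr 1 u ≠ 0) (h1v : sbr 1 v ≠ 0) (huv : sbr u v ≠ 0) :
    ∃ S : AddSubgroup ℂ, (S : Set ℂ) = {z | origamiPts U z} :=
  ⟨{ carrier := {z | origamiPts U z}
     zero_mem' := zero
     add_mem' := add hU (two one_mem hu hv h1u h1v huv)
     neg_mem' := neg (neg_one one_mem hu hv h1u h1v huv) }, rfl⟩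

open ComplexConjugate in
theorem neg_sq_of_norm_eq_one {w : ℂ} (hw : w ∈ U) (hw2 : w ^ 2 ∈ U) (h : sbr (w ^ 2) w ≠ 0)
    (norm_w : ‖w‖ = 1) : origamiPts U (-w ^ 2) := by
  have conj_mul_self : conj w * w = 1 := by rw [Complex.conj_mul', norm_w]; norm_num
  have real_trace : ((2 * w.re : ℝ) : ℂ) = w + conj w := (Complex.add_conj w).symm
  exact of_mem_lines hw2 hw h zero one (-1) (-(2 * w.re)) (by push_cast; ring)
    (by rw [Complex.ofReal_neg, real_trace]; linear_combination conj_mul_self)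

end origamiPts

section Cyclotomic

variable {n : ℕ}

theorem pow_two_mul_eq_one {M : Type*} [Monoid M] {x : M} (hx : x ^ n = 1) : x ^ (2 * n) = 1 := by
  rw [mul_comm, pow_mul, hx, one_pow]

theorem norm_eq_one_of_pow_two_mul_eq_one (hn : n ≠ 0) {u : ℂ} (hu : u ^ (2 * n) = 1) : ‖u‖ = 1 :=
  Complex.norm_eq_one_of_pow_eq_one hu (mul_ne_zero two_ne_zero hn)

theorem exists_addSubgroup_coe_eq_origamiPts_of_odd (hodd : Odd n) (hn : 1 < n) :
    ∃ S : AddSubgroup ℂ, (S : Set ℂ) = {z | origamiPts {w : ℂ | w ^ (2 * n) = 1} z} := by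
  have hζ := Complex.isPrimitiveRoot_exp n (by lia)
  have hζ1 := hζ.ne_one hn
  obtain ⟨w, hw, -, hw1, hζw⟩ := exists_sq_eq_of_pow_odd_eq_one hodd hζ.pow_eq_one hζ1
  exact origamiPts.exists_addSubgroup_coe_eq (U := {w : ℂ | w ^ (2 * n) = 1})
    (fun _ hu => norm_eq_one_of_pow_two_mul_eq_one (by lia) hu) (one_pow _)
    (pow_two_mul_eq_one hζ.pow_eq_one) (pow_two_mul_eq_one hw)
    (sbr_ne_zero_of_pow_odd_eq_one hodd (one_pow n) hζ.pow_eq_one hζ1.symm)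
    (sbr_ne_zero_of_pow_odd_eq_one hodd (one_pow n) hw hw1.symm)
    (sbr_ne_zero_of_pow_odd_eq_one hodd hζ.pow_eq_one hw hζw)

theorem origamiPts_of_mem_closure_of_odd (hodd : Odd n) (hn : 1 < n) {z : ℂ}
    (hz : z ∈ AddSubgroup.closure {x : ℂ | x ^ n = 1}) :
    origamiPts {w : ℂ | w ^ (2 * n) = 1} z := by
  obtain ⟨S, hS⟩ := exists_addSubgroup_coe_eq_origamiPts_of_odd hodd hn
  have mem_S {z : ℂ} : z ∈ S ↔ origamiPts {w : ℂ | w ^ (2 * n) = 1} z := Set.ext_iff.mp hS z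
  suffices roots_subset : {x : ℂ | x ^ n = 1} ⊆ S from
    mem_S.mp ((AddSubgroup.closure_le S).mpr roots_subset hz)
  intro x hx
  obtain rfl | hx1 := eq_or_ne x 1
  · exact mem_S.mpr .one
  obtain ⟨w, hw, rfl, -, hxw⟩ := exists_sq_eq_of_pow_odd_eq_one hodd hx hx1
  have neg_sq_mem : -w ^ 2 ∈ S :=
    mem_S.mpr (.neg_sq_of_norm_eq_one (pow_two_mul_eq_one hw) (pow_two_mul_eq_one hx)
      (sbr_ne_zero_of_pow_odd_eq_one hodd hx hw hxw)
      (Complex.norm_eq_one_of_pow_eq_one hw hodd.pos.ne'))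
  exact neg_mem_iff.mp neg_sq_mem

theorem sbr_div_sbr_mul_mem (hn : n.Prime) {A : Subring ℂ} (hA : ∀ x : ℂ, x ^ n = 1 → x ∈ A)
    {u v p : ℂ} (hu : u ^ (2 * n) = 1) (hv : v ^ (2 * n) = 1) (huv : (u / v) ^ 2 ≠ 1)
    (hp : p ∈ AddSubgroup.closure {x : ℂ | x ^ n = 1}) : sbr u p / sbr u v * v ∈ A := by
  have div_sq_pow {a b : ℂ} (ha : a ^ (2 * n) = 1) (hb : b ^ (2 * n) = 1) :
      ((a / b) ^ 2) ^ n = 1 := by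
    rw [← pow_mul, div_pow, ha, hb, div_one]
  induction hp using AddSubgroup.closure_induction with
  | mem x hx =>
    have hx' : x ^ (2 * n) = 1 := pow_two_mul_eq_one hx
    rw [sbr_div_sbr_mul_of_norm_eq_one (norm_eq_one_of_pow_two_mul_eq_one hn.ne_zero hu)
      (norm_eq_one_of_pow_two_mul_eq_one hn.ne_zero hv)
      (norm_eq_one_of_pow_two_mul_eq_one hn.ne_zero hx')]
    exact mul_mem (hA x hx) (sub_one_div_sub_one_mem_of_pow_prime_eq_one hn
      (hA _ (div_sq_pow hu hv)) (div_sq_pow hu hv) huv (div_sq_pow hu hx'))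
  | zero => simp only [sbr_zero_right, zero_div, zero_mul, zero_mem]
  | add p q _ _ ihp ihq =>
    rw [sbr_add_right, add_div, add_mul]
    exact add_mem ihp ihq
  | neg p _ ihp =>
    rw [sbr_neg_right, neg_div, neg_mul]
    exact neg_mem ihp

theorem mem_subringClosure_of_origamiPts (hn : n.Prime) {ζ : ℂ} (hζ : IsPrimitiveRoot ζ n) {z : ℂ}
    (hz : origamiPts {w : ℂ | w ^ (2 * n) = 1} z) : z ∈ Subring.closure {ζ} := by
  have : NeZero n := ⟨hn.ne_zero⟩
  have mem_iff {z : ℂ} := mem_subringClosure_singleton_iff_of_isPrimitiveRoot hζ (z := z)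
  have roots_mem (x : ℂ) (hx : x ^ n = 1) : x ∈ Subring.closure {ζ} :=
    mem_iff.mpr (AddSubgroup.subset_closure hx)
  induction hz with
  | zero => exact zero_mem _
  | one => exact one_mem _
  | @inter u v hu hv h h' p q _ _ ihp ihq =>
    have hv0 : v ≠ 0 := ne_zero_of_norm_ne_zero
      (norm_eq_one_of_pow_two_mul_eq_one hn.ne_zero hv ▸ one_ne_zero)
    have huv : (u / v) ^ 2 ≠ 1 := div_sq_ne_one hv0 h h'
    have hvu : (v / u) ^ 2 ≠ 1 := by rwa [← inv_div, inv_pow, Ne, inv_eq_one]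
    exact add_mem (sbr_div_sbr_mul_mem hn roots_mem hu hv huv (mem_iff.mp ihp))
      (sbr_div_sbr_mul_mem hn roots_mem hv hu hvu (mem_iff.mp ihq))

end Cyclotomic

/-- For a prime `n ≥ 3`, `R(U_n) = ℤ[ζ_n]`, the subring of `ℂ` generated by
`ζ_n = exp(2πi/n)`.  Here `U_n` is the group of `2n`-th roots of unity in `ℂ`. -/
theorem stmt_17 (n : ℕ) (hn : 3 ≤ n) (hp : n.Prime) :
    {z : ℂ | origamiPts {w : ℂ | w ^ (2 * n) = 1} z} =
      (Subring.closure {Complex.exp (2 * Real.pi * Complex.I / n)} : Set ℂ) := by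
  have : NeZero n := ⟨hp.ne_zero⟩
  have hζ := Complex.isPrimitiveRoot_exp n hp.ne_zero
  have hodd : Odd n := hp.odd_of_ne_two (by lia)
  ext z
  constructor
  · exact mem_subringClosure_of_origamiPts hp hζ
  · intro hz
    exact origamiPts_of_mem_closure_of_odd hodd hp.one_lt
      ((mem_subringClosure_singleton_iff_of_isPrimitiveRoot hζ).mp hz)
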